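/- arXiv:2311.12318 — 15 statements merged into one kernel-verified Lean document; each statement's English description precedes it below -/
import Mathlib

section
/- Let N be a positive integer divisible by 3, and let A be a 3-cube-free subset of Z_N. Then 3·|A| ≤ 2·N (i.e., |A| ≤ 2N/3). -/
/-- `A ⊆ ZMod N` is `d`-cube-free: there is no multiset (encoded as `a : Fin d → ZMod N`)
whose projective `d`-cube (all nonempty subset sums) is contained in `A`. -/
def IsCubeFree (N d : ℕ) (A : Finset (ZMod N)) : Prop :=
  ¬ ∃ a : Fin d → ZMod N, ∀ I : Finset (Fin d), I.Nonempty → (∑ i ∈ I, a i) ∈ A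

theorem double_fiber (N : ℕ) [NeZero N] (A : Finset (ZMod N)) (y : ZMod N) :
    (A.filter (fun x => x + x = y)).card ≤ 2 := by
  classical
  rcases (A.filter (fun x => x + x = y)).eq_empty_or_nonempty with h | ⟨x0, hx0⟩
  · simp [h]
  · have h2 := IsAddCyclic.card_nsmul_eq_zero_le (α := ZMod N) (n := 2) (by norm_num)
    refine le_trans ?_ h2
    refine Finset.card_le_card_of_injOn (fun x => x - x0) ?_ ?_
    · intro x hx
      simp only [Finset.coe_filter, Finset.mem_filter, Set.mem_ofPred_eq] at hx hx0 ⊢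
      refine ⟨Finset.mem_univ _, ?_⟩
      rw [two_nsmul]
      have e : x - x0 + (x - x0) = (x + x) - (x0 + x0) := by ring
      rw [e, hx.2, hx0.2, sub_self]
    · intro x _ z _ h
      exact sub_left_injective h

theorem shift_card (N : ℕ) [NeZero N] (A : Finset (ZMod N)) (t : ZMod N) :
    (Finset.univ.filter (fun c => c + t ∉ A)).card ≤ (Aᶜ).card := by
  refine Finset.card_le_card_of_injOn (fun x => x + t) ?_ ?_
  · intro x hx
    simpa using hx
  · intro x _ z _ h
    exact add_left_injective t h

theorem stmt_0 (N : ℕ) (hN : 0 < N) (h3 : 3 ∣ N) (A : Finset (ZMod N))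
    (hA : IsCubeFree N 3 A) :
    3 * A.card ≤ 2 * N := by
  classical
  have : NeZero N := ⟨hN.ne'⟩
  by_contra hlt
  push Not at hlt
  have hc : A.card + (Aᶜ).card = N := by
    rw [Finset.card_add_card_compl, ZMod.card]
  -- some a with a and 2a in A
  have h1 : ∃ a ∈ A, a + a ∈ A := by
    by_contra hno
    push Not at hno
    have := Finset.card_le_mul_card_image_of_maps_to (s := A) (t := Aᶜ)
      (f := fun x => x + x) (fun x hx => by simpa using hno x hx) 2
      (fun y _ => double_fiber N A y)
    omega
  obtain ⟨a, ha, haa⟩ := h1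
  have h2 : ∃ c, c ∈ A ∧ c + a ∈ A ∧ c + (a + a) ∈ A := by
    by_contra hno
    push Not at hno
    have hsub : (Finset.univ : Finset (ZMod N)) ⊆
        (Finset.univ.filter (fun c => c + 0 ∉ A) ∪ Finset.univ.filter (fun c => c + a ∉ A)) ∪
          Finset.univ.filter (fun c => c + (a + a) ∉ A) := by
      intro c _
      have := hno c
      simp only [Finset.mem_union, Finset.mem_filter, Finset.mem_univ, true_and, add_zero]
      tauto
    have k := Finset.card_le_card hsub
    have k1 := Finset.card_union_le
      (Finset.univ.filter (fun c => c + 0 ∉ A) ∪ Finset.univ.filter (fun c => c + a ∉ A))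
      (Finset.univ.filter (fun c => c + (a + a) ∉ A))
    have k2 := Finset.card_union_le
      (Finset.univ.filter (fun c => c + 0 ∉ A)) (Finset.univ.filter (fun c => c + a ∉ A))
    have s0 := shift_card N A 0
    have s1 := shift_card N A a
    have s2 := shift_card N A (a + a)
    rw [Finset.card_univ, ZMod.card] at k
    omega
  obtain ⟨c, hc0, hc1, hc2⟩ := h2
  apply hA
  refine ⟨![a, a, c], fun I hI => ?_⟩
  have e : ∑ i ∈ I, ![a, a, c] i = (if 0 ∈ I then a else 0) + (if 1 ∈ I then a else 0)
      + (if 2 ∈ I then c else 0) := by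
    have e0 : ∑ i ∈ I, ![a, a, c] i = ∑ i : Fin 3, if i ∈ I then ![a, a, c] i else 0 := by
      rw [Finset.sum_ite_mem, Finset.univ_inter]
    rw [e0, Fin.sum_univ_three]
    rfl
  rw [e]
  have e1 : a + c = c + a := add_comm _ _
  have e2 : a + a + c = c + (a + a) := add_comm _ _
  by_cases i0 : (0 : Fin 3) ∈ I <;> by_cases i1 : (1 : Fin 3) ∈ I <;>
    by_cases i2 : (2 : Fin 3) ∈ I <;> simp only [i0, i1, i2, if_true, if_false, add_zero, zero_add]
      <;> (try simp only [e1, e2]) <;> (try assumption)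
  obtain ⟨i, hi⟩ := hI
  fin_cases i <;> simp_all
end

section
/- Let N be any positive integer and let A be a 3-cube-free subset of Z_N. Then 3·|A| ≤ 2·N (i.e., |A| ≤ 2N/3; no divisibility assumption on N is needed). -/
theorem aux_fiber (N : ℕ) [NeZero N] (b : ZMod N) :
    (Finset.univ.filter (fun a : ZMod N => a + a = b)).card ≤ 2 := by
  rcases (Finset.univ.filter (fun a : ZMod N => a + a = b)).eq_empty_or_nonempty with h | ⟨x, hx⟩
  · rw [h]; simp
  · have hx2 : x + x = b := by simpa using hx
    refine le_trans ?_ (IsAddCyclic.card_nsmul_eq_zero_le (α := ZMod N) (n := 2) (by norm_num))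
    refine Finset.card_le_card_of_injOn (fun a => a - x) ?_ ?_
    · intro a ha
      have ha2 : a + a = b := by simpa using ha
      have : (2 : ℕ) • (a - x) = 0 := by
        rw [two_nsmul]
        linear_combination ha2 - hx2
      simpa using this
    · intro a _ c _ h
      exact sub_left_injective h

theorem aux_exists (N : ℕ) [NeZero N] (S : Finset (ZMod N)) (h : S.card < N) :
    ∃ x, x ∉ S := by
  by_contra! hc
  have : S = Finset.univ := Finset.eq_univ_of_forall hc
  rw [this, Finset.card_univ, ZMod.card] at h
  exact lt_irrefl _ h

theorem stmt_1 (N : ℕ) (hN : 0 < N) (A : Finset (ZMod N))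
    (hA : IsCubeFree N 3 A) :
    3 * A.card ≤ 2 * N := by
  haveI : NeZero N := ⟨hN.ne'⟩
  by_contra! hlt
  apply hA
  have hB : 3 * (Aᶜ).card < N := by
    have h1 := Finset.card_add_card_compl A
    rw [ZMod.card] at h1
    omega
  have hD : (Finset.univ.filter (fun a : ZMod N => a + a ∈ Aᶜ)).card ≤ 2 * (Aᶜ).card := by
    refine Finset.card_le_mul_card_image_of_maps_to (f := fun a : ZMod N => a + a) ?_ 2 ?_
    · intro a ha
      exact (Finset.mem_filter.1 ha).2
    · intro b _
      refine le_trans (Finset.card_le_card ?_) (aux_fiber N b)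
      intro a ha
      simp only [Finset.mem_filter] at ha ⊢
      exact ⟨Finset.mem_univ _, ha.2⟩
  have hT : ∀ t : ZMod N, ((Aᶜ).image (fun x => x - t)).card ≤ (Aᶜ).card :=
    fun t => Finset.card_image_le
  obtain ⟨a, ha⟩ := aux_exists N (Aᶜ ∪ Finset.univ.filter (fun a : ZMod N => a + a ∈ Aᶜ)) (by
    have := Finset.card_union_le (Aᶜ) (Finset.univ.filter (fun a : ZMod N => a + a ∈ Aᶜ))
    omega)
  obtain ⟨c, hc⟩ := aux_exists N
    (Aᶜ ∪ ((Aᶜ).image (fun x => x - a) ∪ (Aᶜ).image (fun x => x - (a + a)))) (by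
    have h1 := Finset.card_union_le (Aᶜ)
      ((Aᶜ).image (fun x => x - a) ∪ (Aᶜ).image (fun x => x - (a + a)))
    have h2 := Finset.card_union_le ((Aᶜ).image (fun x => x - a))
      ((Aᶜ).image (fun x => x - (a + a)))
    have h3 := hT a
    have h4 := hT (a + a)
    omega)
  simp only [Finset.mem_union, not_or] at ha hc
  obtain ⟨ha1, ha2⟩ := ha
  obtain ⟨hc1, hc2, hc3⟩ := hc
  have e1 : a ∈ A := by simpa using ha1
  have e2 : a + a ∈ A := by simpa using ha2
  have e3 : c ∈ A := by simpa using hc1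
  have e4 : a + c ∈ A := by
    by_contra h
    exact hc2 (Finset.mem_image.2 ⟨a + c, Finset.mem_compl.2 h, by ring⟩)
  have e5 : a + (a + c) ∈ A := by
    by_contra h
    exact hc3 (Finset.mem_image.2 ⟨a + (a + c), Finset.mem_compl.2 h, by ring⟩)
  refine ⟨![a, a, c], ?_⟩
  intro I hI
  have hs : ∑ i ∈ I, (![a, a, c] : Fin 3 → ZMod N) i
      = (if (0 : Fin 3) ∈ I then a else 0) + (if (1 : Fin 3) ∈ I then a else 0)
        + (if (2 : Fin 3) ∈ I then c else 0) := by
    have hI2 : I = Finset.univ.filter (fun i => i ∈ I) := by ext; simp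
    conv_lhs => rw [hI2]
    rw [Finset.sum_filter, Fin.sum_univ_three]
    rfl
  rw [hs]
  by_cases h0 : (0 : Fin 3) ∈ I <;> by_cases h1 : (1 : Fin 3) ∈ I <;>
    by_cases h2 : (2 : Fin 3) ∈ I <;> simp only [h0, h1, h2, if_true, if_false, zero_add, add_zero,
      add_assoc] <;> try assumption
  exfalso
  obtain ⟨i, hi⟩ := hI
  fin_cases i
  · exact h0 hi
  · exact h1 hi
  · exact h2 hi
end

section
/- Let N > 1 be an integer and let d be the smallest prime factor of N (i.e., d is prime, d divides N, and every prime p dividing N satisfies d ≤ p). If A is a d-cube-free subset of Z_N, then d·|A| ≤ (d−1)·N (i.e., |A| ≤ (d−1)N/d). -/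
theorem exists_avoid {α : Type*} [Fintype α] [DecidableEq α] (B : Finset α) (s : Finset ℕ)
    (f : ℕ → α → α) (hf : ∀ j ∈ s, Function.Injective (f j))
    (h : s.card * B.card < Fintype.card α) : ∃ x, ∀ j ∈ s, f j x ∉ B := by
  by_contra! hc
  have h1 : (Finset.univ : Finset α) ⊆
      s.biUnion (fun j => Finset.univ.filter (fun x => f j x ∈ B)) := by
    intro x _
    obtain ⟨j, hj, hx⟩ := hc x
    simp only [Finset.mem_biUnion, Finset.mem_filter, Finset.mem_univ, true_and]
    exact ⟨j, hj, hx⟩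
  have h2 := Finset.card_le_card h1
  have h3 := Finset.card_biUnion_le_card_mul s
    (fun j => Finset.univ.filter (fun x => f j x ∈ B)) B.card (by
      intro j hj
      apply Finset.card_le_card_of_injOn (f j)
      · intro x hx
        simpa using hx
      · exact (hf j hj).injOn)
  rw [Finset.card_univ] at h2
  omega

theorem stmt_2 (N d : ℕ) (hN : 1 < N) (hd : d.Prime) (hdN : d ∣ N)
    (hmin : ∀ p : ℕ, p.Prime → p ∣ N → d ≤ p) (A : Finset (ZMod N))
    (hA : IsCubeFree N d A) :
    d * A.card ≤ (d - 1) * N := by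
  by_contra! hlt
  apply hA
  have : NeZero N := ⟨by omega⟩
  obtain ⟨k, rfl⟩ : ∃ k, d = k + 1 := ⟨d - 1, by have := hd.two_le; omega⟩
  have hcard : Aᶜ.card + A.card = N := by
    have := Finset.card_compl_add_card A
    rwa [ZMod.card] at this
  simp only [Nat.add_sub_cancel] at hlt
  have hB : (k + 1) * Aᶜ.card < N := by nlinarith
  obtain ⟨a, ha⟩ := exists_avoid Aᶜ (Finset.Icc 1 k) (fun j x => (j : ZMod N) * x) (by
    intro j hj
    rw [Finset.mem_Icc] at hj
    have hc : Nat.Coprime j N := by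
      apply Nat.coprime_of_dvd
      intro p hp hpj hpN
      have h1 := hmin p hp hpN
      have h2 := Nat.le_of_dvd (by omega) hpj
      omega
    exact ((ZMod.isUnit_iff_coprime j N).2 hc).mul_right_injective) (by
    rw [ZMod.card, Nat.card_Icc]
    simp only [Nat.add_sub_cancel]
    nlinarith)
  obtain ⟨b, hb⟩ := exists_avoid Aᶜ (Finset.range (k+1)) (fun j x => x + (j : ZMod N) * a) (by
    intro j _
    exact add_left_injective _) (by
    rw [ZMod.card, Finset.card_range]
    exact hB)
  simp only [Finset.mem_compl, not_not] at ha hb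
  refine ⟨fun i => if i = 0 then b else a, ?_⟩
  have key : ∀ J : Finset (Fin (k+1)), 0 ∉ J →
      J.card ≤ k ∧ ∑ i ∈ J, (if i = 0 then b else a) = (J.card : ZMod N) * a := by
    intro J hJ
    constructor
    · have h1 : J ⊆ Finset.univ.erase 0 := fun x hx =>
        Finset.mem_erase.2 ⟨fun h => hJ (h ▸ hx), Finset.mem_univ _⟩
      have := Finset.card_le_card h1
      simpa using this
    · have h1 : ∀ x ∈ J, (if x = 0 then b else a) = a := fun x hx =>
        if_neg (fun h : x = 0 => hJ (h ▸ hx))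
      rw [Finset.sum_congr rfl h1]
      simp
  intro I hI
  by_cases h0 : 0 ∈ I
  · obtain ⟨h1, h2⟩ := key (I.erase 0) (Finset.notMem_erase _ _)
    rw [← Finset.add_sum_erase I _ h0, h2, if_pos rfl]
    exact hb _ (Finset.mem_range.2 (by omega))
  · obtain ⟨h1, h2⟩ := key I h0
    rw [h2]
    exact ha _ (Finset.mem_Icc.2 ⟨hI.card_pos, h1⟩)
end

section
/- Let p be a prime, l ≥ 1 an integer, and N = p^l. Let d ≥ 2 be an integer dividing N. If A is a d-cube-free subset of Z_N, then d·|A| ≤ (d−1)·N (i.e., |A| ≤ (d−1)N/d). -/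
lemma aux_count (p l k b : ℕ) (hp : p.Prime) (hkl : k ≤ l) :
    ((Finset.range (p ^ l)).filter (fun t => 1 ≤ (b * (1 + p * t)) % p ^ l ∧
      (b * (1 + p * t)) % p ^ l < p ^ k)).card ≤ p ^ k := by
  by_cases hdb : p ^ k ∣ b
  · rw [Finset.filter_false_of_mem]
    · simp
    · rintro t - ⟨h1, h2⟩
      have h3 : p ^ k ∣ (b * (1 + p * t)) % p ^ l :=
        (Nat.dvd_mod_iff (pow_dvd_pow p hkl)).2 (Dvd.dvd.mul_right hdb _)
      have := Nat.le_of_dvd h1 h3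
      omega
  · have hb0 : b ≠ 0 := by rintro rfl; simp at hdb
    obtain ⟨w, b', hb', rfl⟩ := Nat.exists_eq_pow_mul_and_not_dvd hb0 p hp.ne_one
    have hwk : w < k := by
      by_contra h
      exact hdb (Dvd.dvd.mul_right (pow_dvd_pow p (not_lt.1 h)) _)
    obtain ⟨e, rfl⟩ : ∃ e, k = w + 1 + e := ⟨k - (w+1), by omega⟩
    obtain ⟨f, rfl⟩ : ∃ f, l = w + 1 + f := ⟨l - (w+1), by omega⟩
    have hpp := hp.pos
    have hcop : Nat.Coprime (p ^ f) b' := Nat.Coprime.pow_left _ ((hp.coprime_iff_not_dvd).2 hb')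
    set b := p ^ w * b' with hbdef
    have key := Finset.card_le_card_of_injOn
      (s := (Finset.range (p ^ (w+1+f))).filter (fun t => 1 ≤ (b * (1 + p * t)) % p ^ (w+1+f) ∧
      (b * (1 + p * t)) % p ^ (w+1+f) < p ^ (w+1+e)))
      (t := Finset.range (p ^ (w+1)) ×ˢ Finset.range (p ^ e))
      (fun t => (t / p ^ f, ((b * (1 + p * t)) % p ^ (w+1+f)) / p ^ (w+1))) ?_ ?_
    · simpa [pow_add] using key
    · intro t ht
      simp only [Finset.coe_filter, Finset.mem_range, Set.mem_ofPred_eq] at ht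
      obtain ⟨h0, h1, h2⟩ := ht
      simp only [Finset.coe_product, Finset.coe_range, Set.mem_prod, Set.mem_Iio]
      refine ⟨?_, ?_⟩
      · apply Nat.div_lt_of_lt_mul
        rwa [mul_comm, ← pow_add]
      · apply Nat.div_lt_of_lt_mul
        rwa [← pow_add]
    · intro t ht s hs hts
      simp only [Prod.mk.injEq] at hts
      obtain ⟨h1, h2⟩ := hts
      have hm : ∀ t, ((b * (1 + p * t)) % p ^ (w+1+f)) % p ^ (w+1) = b % p ^ (w+1) := by
        intro t
        rw [Nat.mod_mod_of_dvd _ (pow_dvd_pow p (by omega))]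
        have : b * (1 + p * t) = b + p ^ (w+1) * (b' * t) := by rw [hbdef]; ring
        rw [this, Nat.add_mul_mod_self_left]
      have h3 : b * (1 + p * t) ≡ b * (1 + p * s) [MOD p ^ (w+1+f)] := by
        unfold Nat.ModEq
        rw [← Nat.div_add_mod ((b * (1 + p * t)) % p ^ (w+1+f)) (p ^ (w+1)),
          ← Nat.div_add_mod ((b * (1 + p * s)) % p ^ (w+1+f)) (p ^ (w+1)), h2, hm, hm]
      have e1 : ∀ t, b * (1 + p * t) = b + p ^ (w+1) * (b' * t) := by
        intro t; rw [hbdef]; ring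
      rw [e1, e1, pow_add p (w+1) f] at h3
      have h4 := Nat.ModEq.add_left_cancel' _ h3
      have h5 := Nat.ModEq.mul_left_cancel' (pow_pos hpp (w+1)).ne' h4
      have h6 : t % p ^ f = s % p ^ f := Nat.ModEq.cancel_left_of_coprime hcop h5
      rw [← Nat.div_add_mod t (p ^ f), ← Nat.div_add_mod s (p ^ f), h1, h6]

theorem stmt_3 (p l N d : ℕ) (hp : p.Prime) (hl : 1 ≤ l) (hN : N = p ^ l)
    (hd : 2 ≤ d) (hdN : d ∣ N) (A : Finset (ZMod N))
    (hA : IsCubeFree N d A) :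
    d * A.card ≤ (d - 1) * N := by
  by_contra hcon
  push Not at hcon
  apply hA
  have hNpos : 0 < N := hN ▸ pow_pos hp.pos l
  haveI : NeZero N := ⟨hNpos.ne'⟩
  obtain ⟨k, hkl, hk⟩ := (Nat.dvd_prime_pow hp).1 (hN ▸ hdN)
  have hB : d * (Aᶜ).card < N := by
    have h1 : A.card + (Aᶜ).card = N := by
      rw [Finset.card_add_card_compl, ZMod.card]
    obtain ⟨e, rfl⟩ : ∃ e, d = e + 1 := ⟨d - 1, by omega⟩
    simp only [Nat.add_sub_cancel] at hcon
    nlinarith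
  -- choose x
  have hx : ∃ x : ZMod N, ∀ j : ℕ, 1 ≤ j → j < d → (j : ZMod N) * x ∈ A := by
    have hlt : ((Aᶜ).biUnion (fun b => (Finset.range N).filter (fun t =>
        1 ≤ (b.val * (1 + p * t)) % N ∧ (b.val * (1 + p * t)) % N < d))).card
        < (Finset.range N).card := by
      refine lt_of_le_of_lt (Finset.card_biUnion_le_card_mul _ _ d ?_) ?_
      · intro b _
        have := aux_count p l k b.val hp hkl
        rw [← hN, ← hk] at this
        exact this
      · rw [Finset.card_range, mul_comm]; exact hB
    obtain ⟨t, ht, ht'⟩ := Finset.exists_mem_notMem_of_card_lt_card hlt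
    have hcop : Nat.Coprime (1 + p * t) N := by
      rw [hN]
      apply Nat.Coprime.pow_right
      simp
    refine ⟨((1 + p * t : ℕ) : ZMod N)⁻¹, fun j h1 h2 => ?_⟩
    by_contra hj
    apply ht'
    simp only [Finset.mem_biUnion, Finset.mem_filter]
    refine ⟨_, Finset.mem_compl.2 hj, ht, ?_⟩
    have hjN : j < N := lt_of_lt_of_le h2 (Nat.le_of_dvd hNpos hdN)
    have : (((j : ZMod N) * ((1 + p * t : ℕ) : ZMod N)⁻¹).val * (1 + p * t)) % N = j := by
      rw [← ZMod.val_natCast, Nat.cast_mul, ZMod.natCast_zmod_val, mul_assoc, mul_comm _⁻¹,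
        ZMod.coe_mul_inv_eq_one _ hcop, mul_one, ZMod.val_natCast, Nat.mod_eq_of_lt hjN]
    rw [this]
    exact ⟨h1, h2⟩
  obtain ⟨x, hx⟩ := hx
  have hy : ∃ y : ZMod N, ∀ j : ℕ, j < d → (j : ZMod N) * x + y ∈ A := by
    have hlt : (Finset.image (fun q : ℕ × ZMod N => q.2 - (q.1 : ZMod N) * x)
        (Finset.range d ×ˢ Aᶜ)).card < (Finset.univ : Finset (ZMod N)).card := by
      refine lt_of_le_of_lt Finset.card_image_le ?_
      rw [Finset.card_product, Finset.card_range, Finset.card_univ, ZMod.card]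
      exact hB
    obtain ⟨y, -, hy⟩ := Finset.exists_mem_notMem_of_card_lt_card hlt
    refine ⟨y, fun j hj => ?_⟩
    by_contra h
    apply hy
    rw [Finset.mem_image]
    exact ⟨(j, (j : ZMod N) * x + y), by simp [hj, h], by simp⟩
  obtain ⟨y, hy⟩ := hy
  obtain ⟨e, rfl⟩ : ∃ e, d = e + 1 := ⟨d - 1, by omega⟩
  refine ⟨fun i => if i = Fin.last e then y else x, fun I hI => ?_⟩
  have hE : ∀ J : Finset (Fin (e+1)), Fin.last e ∉ J →
      J.card < e + 1 ∧ ∑ i ∈ J, (if i = Fin.last e then y else x) = (J.card : ZMod N) * x := by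
    intro J hJ
    constructor
    · have := Finset.card_lt_univ_of_notMem hJ
      simpa using this
    · rw [Finset.sum_congr rfl (g := fun _ => x), Finset.sum_const, nsmul_eq_mul]
      intro i hi
      rw [if_neg]
      rintro rfl
      exact hJ hi
  by_cases hmem : Fin.last e ∈ I
  · obtain ⟨h1, h2⟩ := hE (I.erase (Fin.last e)) (Finset.notMem_erase _ _)
    rw [← Finset.sum_erase_add _ _ hmem, h2, if_pos rfl]
    exact hy _ h1
  · obtain ⟨h1, h2⟩ := hE I hmem
    rw [h2]
    exact hx _ hI.card_pos h1
end

section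
/- Let d ≥ 2 and N ≥ 1 be integers with d dividing N, and let B = {b ∈ Z_N : b ≡ 1, 2, …, or d−1 (mod d)}, i.e., the set of b ∈ Z_N whose image under the natural ring homomorphism Z_N → Z_d is nonzero. Then B is d-cube-free and d·|B| = (d−1)·N, so the bound (d−1)N/d for d-cube-free subsets of Z_N is tight. -/
theorem stmt_4 (N d : ℕ) [NeZero N] (hd : 2 ≤ d) (hdN : d ∣ N) :
    IsCubeFree N d (Finset.univ.filter
        (fun b : ZMod N => ZMod.castHom hdN (ZMod d) b ≠ 0)) ∧
      d * (Finset.univ.filter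
        (fun b : ZMod N => ZMod.castHom hdN (ZMod d) b ≠ 0)).card = (d - 1) * N := by
  have : NeZero d := ⟨by omega⟩
  constructor
  · rintro ⟨a, ha⟩
    let φ := ZMod.castHom hdN (ZMod d)
    let S : Fin (d + 1) → ZMod d := fun j =>
      ∑ i ∈ Finset.univ.filter (fun i : Fin d => i.val < j.val), φ (a i)
    have key : ∀ x y : Fin (d + 1), x < y → S x = S y → False := by
      intro x y hxy hS
      have hxy' : x.val < y.val := hxy
      have hx : x.val < d := by have := y.isLt; omega
      have h := ha (Finset.univ.filter (fun i : Fin d => i.val < y.val) \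
        Finset.univ.filter (fun i : Fin d => i.val < x.val)) ⟨⟨x.val, hx⟩, by simpa using hxy⟩
      rw [Finset.mem_filter] at h
      apply h.2
      rw [map_sum]
      have h2 := Finset.sum_sdiff (f := fun i => φ (a i))
        (s₁ := Finset.univ.filter (fun i : Fin d => i.val < x.val))
        (s₂ := Finset.univ.filter (fun i : Fin d => i.val < y.val))
        (by intro i hi; simp only [Finset.mem_filter, Finset.mem_univ, true_and] at hi ⊢; omega)
      have h3 : _ + S x = S y := h2
      rw [hS] at h3
      exact add_eq_right.mp h3
    obtain ⟨x, y, hne, hS⟩ := Fintype.exists_ne_map_eq_of_card_lt S (by simp [ZMod.card])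
    rcases lt_or_gt_of_ne hne with h | h
    · exact key x y h hS
    · exact key y x h hS.symm
  · let f := (ZMod.castHom hdN (ZMod d)).toAddMonoidHom
    have h1 := f.ker.card_mul_index
    rw [AddSubgroup.index_ker, AddMonoidHom.range_eq_top.mpr (ZMod.castHom_surjective hdN)] at h1
    have h2 : Nat.card f.ker = (Finset.univ.filter
        (fun b : ZMod N => ZMod.castHom hdN (ZMod d) b = 0)).card := by
      rw [Nat.card_eq_fintype_card]
      exact Fintype.card_of_subtype _ (fun x => by
        simp only [Finset.mem_filter, Finset.mem_univ, true_and]; rfl)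
    have h3 := Finset.card_filter_add_card_filter_not (s := Finset.univ)
      (fun b : ZMod N => ZMod.castHom hdN (ZMod d) b = 0)
    rw [h2] at h1
    simp only [Nat.card_zmod, AddSubgroup.card_top] at h1
    rw [Finset.card_univ, ZMod.card] at h3
    obtain ⟨e, rfl⟩ : ∃ e, d = e + 1 := ⟨d - 1, by omega⟩
    simp only [Nat.add_sub_cancel, ne_eq]
    nlinarith
end

section
/- Let d ≥ 1 and t be integers with 1 ≤ t ≤ d, and let a₁, …, a_t be elements of Z_d, all nonzero. Define S_t = { ∑_{i ∈ I} a_i : I a nonempty subset of {1, …, t} } (the set of all sums ∑ λ_i a_i with λ_i ∈ {0,1} not all zero). If 0 ∉ S_t, then |S_t| ≥ t. -/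
/-- The set of all subset-sums `∑_{i ∈ I} a i` over nonempty subsets `I ⊆ Fin t`. -/
def subsetSums {d t : ℕ} (a : Fin t → ZMod d) : Finset (ZMod d) :=
  (Finset.univ.filter (fun I : Finset (Fin t) => I.Nonempty)).image
    (fun I => ∑ i ∈ I, a i)

theorem stmt_5 (d t : ℕ) (hd : 1 ≤ d) (ht : 1 ≤ t) (htd : t ≤ d)
    (a : Fin t → ZMod d) (ha : ∀ i, a i ≠ 0)
    (h0 : (0 : ZMod d) ∉ subsetSums a) :
    t ≤ (subsetSums a).card := by
  have key : ∀ j k : Fin t, j < k →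
      ∑ i ∈ Finset.Iic j, a i ≠ ∑ i ∈ Finset.Iic k, a i := by
    intro j k hjk heq
    apply h0
    have hsub : Finset.Iic j ⊆ Finset.Iic k := Finset.Iic_subset_Iic.mpr hjk.le
    have h := Finset.sum_sdiff (f := a) hsub
    rw [heq] at h
    refine Finset.mem_image.mpr ⟨Finset.Iic k \ Finset.Iic j, ?_, by simpa using h⟩
    simp only [Finset.mem_filter, Finset.mem_univ, true_and]
    exact ⟨k, by simp [hjk]⟩
  have hinj : Function.Injective (fun k : Fin t => ∑ i ∈ Finset.Iic k, a i) := by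
    intro j k h
    rcases lt_trichotomy j k with hlt | heq | hgt
    · exact absurd h (key j k hlt)
    · exact heq
    · exact absurd h.symm (key k j hgt)
  calc t = (Finset.univ.image (fun k : Fin t => ∑ i ∈ Finset.Iic k, a i)).card := by
        rw [Finset.card_image_of_injective _ hinj]; simp
    _ ≤ _ := by
        apply Finset.card_le_card
        intro x hx
        obtain ⟨k, -, rfl⟩ := Finset.mem_image.mp hx
        refine Finset.mem_image.mpr ⟨Finset.Iic k, ?_, rfl⟩
        simp only [Finset.mem_filter, Finset.mem_univ, true_and]
        exact ⟨k, by simp⟩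
end

section
/- Let d ≥ 2 and N ≥ 1 be integers and let A be a d-cube-free subset of Z_N. If there exists x ∈ Z_N such that i·x ∈ A for every integer i with 1 ≤ i ≤ d−1 (i.e., A contains the diagonal set {x, 2x, …, (d−1)x}), then d·|A| ≤ (d−1)·N. -/
theorem stmt_6 (N d : ℕ) (hN : 1 ≤ N) (hd : 2 ≤ d) (A : Finset (ZMod N))
    (hA : IsCubeFree N d A)
    (hx : ∃ x : ZMod N, ∀ i : ℕ, 1 ≤ i → i ≤ d - 1 → i • x ∈ A) :
    d * A.card ≤ (d - 1) * N := by
  obtain ⟨x, hx⟩ := hx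
  have : NeZero N := ⟨by omega⟩
  have key : ∀ y : ZMod N, ∃ i ∈ Finset.range d, y + i • x ∉ A := by
    intro y
    by_contra hcon
    push Not at hcon
    apply hA
    obtain ⟨k, rfl⟩ : ∃ k, d = k + 1 := ⟨d - 1, by omega⟩
    refine ⟨fun i => if i = 0 then y else x, ?_⟩
    intro I hI
    by_cases h0 : (0 : Fin (k+1)) ∈ I
    · rw [← Finset.add_sum_erase I _ h0]
      have h1 : ∑ i ∈ I.erase 0, (if i = 0 then y else x) = (I.erase 0).card • x := by
        rw [← Finset.sum_const]
        apply Finset.sum_congr rfl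
        intro i hi
        rw [if_neg (Finset.ne_of_mem_erase hi)]
      rw [h1, if_pos rfl]
      apply hcon
      rw [Finset.mem_range]
      have h2 := Finset.card_erase_lt_of_mem h0
      have h3 := Finset.card_le_univ I
      rw [Fintype.card_fin] at h3
      omega
    · have h1 : ∑ i ∈ I, (if i = 0 then y else x) = I.card • x := by
        rw [← Finset.sum_const]
        apply Finset.sum_congr rfl
        intro i hi
        have hne : i ≠ 0 := by
          rintro rfl
          exact h0 hi
        rw [if_neg hne]
      rw [h1]
      apply hx _ hI.card_pos
      have h3 := Finset.card_le_univ (insert 0 I)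
      rw [Fintype.card_fin, Finset.card_insert_of_notMem h0] at h3
      omega
  have h1 : N ≤ ∑ y : ZMod N, ∑ i ∈ Finset.range d, (if y + i • x ∉ A then 1 else 0) := by
    calc N = ∑ y : ZMod N, 1 := by simp [ZMod.card]
      _ ≤ _ := by
        apply Finset.sum_le_sum
        intro y _
        obtain ⟨i, hi, h⟩ := key y
        have := Finset.single_le_sum (f := fun i : ℕ => if y + i • x ∉ A then 1 else 0)
          (fun _ _ => Nat.zero_le _) hi
        simpa only [if_pos h] using this
  rw [Finset.sum_comm] at h1
  have h2 : ∀ i ∈ Finset.range d,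
      ∑ y : ZMod N, (if y + i • x ∉ A then 1 else 0) = N - A.card := by
    intro i _
    refine (Equiv.sum_comp (Equiv.addRight (i • x)) (fun y => if y ∉ A then 1 else 0)).trans ?_
    rw [← Finset.card_filter]
    have : Finset.univ.filter (fun y => y ∉ A) = Aᶜ := by ext; simp
    rw [this, Finset.card_compl, ZMod.card]
  rw [Finset.sum_congr rfl h2, Finset.sum_const, Finset.card_range, smul_eq_mul] at h1
  have h3 : A.card ≤ N := by
    have := Finset.card_le_univ A
    rwa [ZMod.card] at this
  zify [h3, (by omega : 1 ≤ d)] at h1 ⊢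
  linarith
end

section
/- Let d ≥ 2 be an integer. There exists a constant C > 0 (depending only on d) such that for every integer N ≥ 2 and every subset A of {1, 2, …, N} that is {x, dx}-free (i.e., there is no positive integer x with both x ∈ A and d·x ∈ A), one has |A| ≤ d/(d+1)·N + C·log N. -/
lemma step_aux (d N : ℕ) (hd : 2 ≤ d) (A : Finset ℕ) (hA : A ⊆ Finset.Icc 1 N)
    (h : ¬ ∃ x : ℕ, 0 < x ∧ x ∈ A ∧ d * x ∈ A) :
    A.card + N / d ≤ N + (A.filter (· ≤ N / d / d)).card := by
  have hd0 : 0 < d := by omega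
  set M := N / d / d with hM
  have hMN : M ≤ N / d := Nat.div_le_self _ _
  have hNd : N / d ≤ N := Nat.div_le_self _ _
  have h1 : (Finset.Ioc M (N / d)).card ≤ (Finset.Ioc M N \ A).card := by
    apply Finset.card_le_card_of_injOn (fun x => if x ∈ A then d * x else x)
    · intro x hx
      simp only [Finset.coe_Ioc, Set.mem_Ioc] at hx
      simp only [Finset.coe_sdiff, Finset.coe_Ioc, Set.mem_sdiff, Set.mem_Ioc, Finset.mem_coe]
      split_ifs with hxA
      · have : d * x ≤ N := by
          have := (Nat.le_div_iff_mul_le hd0).1 hx.2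
          linarith [mul_comm x d]
        refine ⟨⟨by nlinarith, this⟩, fun h' => h ⟨x, Nat.zero_lt_of_lt hx.1, hxA, h'⟩⟩
      · exact ⟨⟨hx.1, by omega⟩, hxA⟩
    · have key : ∀ x, M < x → N / d < d * x := by
        intro x hx
        have := (Nat.div_lt_iff_lt_mul hd0).1 hx
        linarith [mul_comm x d]
      intro x hx y hy hxy
      simp only [Finset.coe_Ioc, Set.mem_Ioc] at hx hy
      have kx := key x hx.1
      have ky := key y hy.1
      simp only at hxy
      split_ifs at hxy
      · exact Nat.eq_of_mul_eq_mul_left hd0 hxy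
      · omega
      · omega
      · exact hxy
  have h2 : (A.filter (fun x => ¬ x ≤ M)).card + (Finset.Ioc M N \ A).card
      ≤ (Finset.Ioc M N).card := by
    rw [← Finset.card_union_of_disjoint]
    · apply Finset.card_le_card
      intro x hx
      simp only [Finset.mem_union, Finset.mem_filter, Finset.mem_sdiff, Finset.mem_Ioc] at hx ⊢
      rcases hx with hx | hx
      · have := Finset.mem_Icc.1 (hA hx.1)
        omega
      · exact hx.1
    · rw [Finset.disjoint_left]
      intro x hx hx'
      exact (Finset.mem_sdiff.1 hx').2 (Finset.mem_filter.1 hx).1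
  have h3 := Finset.card_filter_add_card_filter_not (s := A) (fun x => x ≤ M)
  simp only [Nat.card_Ioc] at h1 h2
  omega

lemma main_aux (d : ℕ) (hd : 2 ≤ d) : ∀ N : ℕ, 1 ≤ N → ∀ A ⊆ Finset.Icc 1 N,
      (¬ ∃ x : ℕ, 0 < x ∧ x ∈ A ∧ d * x ∈ A) →
      (A.card : ℝ) ≤ (d : ℝ) / (d + 1) * N + 1 + Real.log N := by
  intro N
  induction N using Nat.strong_induction_on with
  | _ N ih =>
  intro hN A hA h
  have hs := step_aux d N hd A hA h
  have hd0 : 0 < d := by omega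
  have hdR : (2:ℝ) ≤ d := by exact_mod_cast hd
  have hNR : (1:ℝ) ≤ N := by exact_mod_cast hN
  have hsR : (A.card : ℝ) + ((N / d : ℕ) : ℝ) ≤ N + ((A.filter (· ≤ N / d / d)).card : ℝ) := by
    exact_mod_cast hs
  have hfl : (N:ℝ) / d ≤ ((N / d : ℕ) : ℝ) + 1 := by
    rw [← Nat.floor_div_eq_div (K := ℝ)]
    exact (Nat.lt_floor_add_one _).le
  have hid : (d:ℝ) / (d + 1) * N = N - N / d + (d:ℝ) / (d + 1) * (N / d / d) := by
    field_simp
    ring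
  have hc : 0 ≤ (d:ℝ) / (d + 1) := by positivity
  have hML : ((N / d / d : ℕ) : ℝ) ≤ (N:ℝ) / d / d := by
    refine Nat.cast_div_le.trans ?_
    gcongr
    exact Nat.cast_div_le
  have hlogN := Real.log_nonneg hNR
  have hsub : A.filter (· ≤ N / d / d) ⊆ Finset.Icc 1 (N / d / d) := by
    intro x hx
    rw [Finset.mem_filter] at hx
    exact Finset.mem_Icc.2 ⟨(Finset.mem_Icc.1 (hA hx.1)).1, hx.2⟩
  rcases Nat.eq_zero_or_pos (N / d / d) with h0 | hpos
  · have hc0 : (A.filter (· ≤ N / d / d)).card = 0 := by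
      have := Finset.card_le_card hsub
      rw [h0] at this ⊢
      simpa using this
    rw [hc0] at hsR
    have : 0 ≤ (d:ℝ) / (d + 1) * (N / d / d) := by positivity
    push_cast at hsR
    linarith
  · have hlt : N / d / d < N :=
      lt_of_le_of_lt (Nat.div_le_self _ _) (Nat.div_lt_self (by omega) (by omega))
    have := ih _ hlt hpos _ hsub (fun ⟨x, hx, h1, h2⟩ =>
      h ⟨x, hx, (Finset.mem_filter.1 h1).1, (Finset.mem_filter.1 h2).1⟩)
    have hm := mul_le_mul_of_nonneg_left hML hc
    have hposR : (0:ℝ) < ((N / d / d : ℕ) : ℝ) := by exact_mod_cast hpos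
    have hl : Real.log ((N / d / d : ℕ) : ℝ) + 1 ≤ Real.log N := by
      have h4 : ((N / d / d : ℕ) : ℝ) ≤ N / (2 * 2) := by
        refine hML.trans ?_
        rw [div_div]
        gcongr
      have := Real.log_le_log hposR h4
      rw [Real.log_div (by positivity) (by norm_num), Real.log_mul (by norm_num) (by norm_num)] at this
      have := Real.log_two_gt_d9
      linarith
    linarith

theorem stmt_8 (d : ℕ) (hd : 2 ≤ d) :
    ∃ C : ℝ, 0 < C ∧ ∀ N : ℕ, 2 ≤ N → ∀ A ⊆ Finset.Icc 1 N,
      (¬ ∃ x : ℕ, 0 < x ∧ x ∈ A ∧ d * x ∈ A) →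
      (A.card : ℝ) ≤ (d : ℝ) / (d + 1) * N + C * Real.log N := by
  refine ⟨3, by norm_num, fun N hN A hA h => ?_⟩
  have h1 := main_aux d hd N (by omega) A hA h
  have h2 : Real.log 2 ≤ Real.log N := Real.log_le_log (by norm_num) (by exact_mod_cast hN)
  have := Real.log_two_gt_d9
  linarith
end

section
/- Let d ≥ 1 and N ≥ 1 be integers, let A be a subset of Z_N that is {x, dx}-free (i.e., there is no x ∈ Z_N with both x ∈ A and d·x ∈ A), and let k = gcd(d, N). Then (k+1)·|A| ≤ k·N (i.e., |A| ≤ kN/(k+1)). -/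
theorem stmt_9 (N d : ℕ) (hN : 1 ≤ N) (hd : 1 ≤ d) (A : Finset (ZMod N))
    (hA : ¬ ∃ x : ZMod N, x ∈ A ∧ d • x ∈ A) :
    (Nat.gcd d N + 1) * A.card ≤ Nat.gcd d N * N := by
  classical
  haveI : NeZero N := ⟨by omega⟩
  have hk : 0 < Nat.gcd d N := Nat.gcd_pos_of_pos_left _ hd
  have h1 : A.card ≤ Nat.gcd d N * (A.image (fun x => d • x)).card := by
    apply Finset.card_le_mul_card_image
    intro b hb
    obtain ⟨a, ha, rfl⟩ := Finset.mem_image.1 hb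
    refine le_trans ?_ (IsAddCyclic.card_nsmul_eq_zero_le (α := ZMod N) hk)
    apply Finset.card_le_card_of_injOn (fun x => x - a)
    · intro x hx
      simp only [Finset.coe_filter, Set.mem_setOf_eq] at hx
      simp only [Finset.coe_filter, Set.mem_setOf_eq, Finset.mem_univ, true_and]
      apply addOrderOf_dvd_iff_nsmul_eq_zero.1
      apply Nat.dvd_gcd
      · apply addOrderOf_dvd_iff_nsmul_eq_zero.2
        rw [nsmul_sub, hx.2, sub_self]
      · apply addOrderOf_dvd_iff_nsmul_eq_zero.2
        simp
    · intro x _ y _ h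
      exact sub_left_injective h
  have h2 : A.card + (A.image (fun x => d • x)).card ≤ N := by
    rw [← Finset.card_union_of_disjoint]
    · exact (Finset.card_le_univ _).trans (ZMod.card N).le
    · rw [Finset.disjoint_left]
      intro y hy hy'
      obtain ⟨a, ha, rfl⟩ := Finset.mem_image.1 hy'
      exact hA ⟨a, ha, hy⟩
  nlinarith [Nat.mul_le_mul_left (Nat.gcd d N) h2]
end

section
/- Let d ≥ 2 and N ≥ 1 be integers with d dividing N, and let A be a subset of Z_N that is {x, (d−1)x}-free (i.e., there is no x ∈ Z_N with both x ∈ A and (d−1)·x ∈ A). Then, with k = gcd(d−1, N), one has (k+1)·|A| ≤ k·N, and in particular d·|A| ≤ (d−1)·N. -/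
theorem stmt_10 (N d : ℕ) (hN : 1 ≤ N) (hd : 2 ≤ d) (hdN : d ∣ N)
    (A : Finset (ZMod N))
    (hA : ¬ ∃ x : ZMod N, x ∈ A ∧ (d - 1) • x ∈ A) :
    (Nat.gcd (d - 1) N + 1) * A.card ≤ Nat.gcd (d - 1) N * N ∧
      d * A.card ≤ (d - 1) * N := by
  classical
  haveI : NeZero N := ⟨by omega⟩
  have hk : 0 < Nat.gcd (d - 1) N := Nat.gcd_pos_of_pos_right _ hN
  have hkd : Nat.gcd (d - 1) N ≤ d - 1 := Nat.gcd_le_left _ (by omega)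
  have hker : ∀ z : ZMod N, (d - 1) • z = 0 → Nat.gcd (d - 1) N • z = 0 := by
    intro z hz
    rw [← addOrderOf_dvd_iff_nsmul_eq_zero] at hz ⊢
    refine Nat.dvd_gcd hz ?_
    rw [addOrderOf_dvd_iff_nsmul_eq_zero]
    simp
  have h1 : A.card ≤ Nat.gcd (d - 1) N * (A.image (fun x => (d - 1) • x)).card := by
    refine Finset.card_le_mul_card_image A _ ?_
    intro b hb
    obtain ⟨y, hy, rfl⟩ := Finset.mem_image.1 hb
    refine le_trans ?_ (IsAddCyclic.card_nsmul_eq_zero_le (α := ZMod N) hk)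
    refine Finset.card_le_card_of_injOn (fun x => x - y) ?_ ?_
    · intro x hx
      have hx' := (Finset.mem_filter.1 hx).2
      have : Nat.gcd (d - 1) N • (x - y) = 0 := by
        apply hker
        rw [nsmul_sub, sub_eq_zero]
        exact hx'
      simpa using this
    · intro x _ z _ h
      simpa using h
  have h2 : A.card + (A.image (fun x => (d - 1) • x)).card ≤ N := by
    rw [← Finset.card_union_of_disjoint]
    · exact (Finset.card_le_univ _).trans (ZMod.card N).le
    · rw [Finset.disjoint_left]
      intro a ha hb
      obtain ⟨y, hy, rfl⟩ := Finset.mem_image.1 hb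
      exact hA ⟨y, hy, ha⟩
  generalize (A.image (fun x => (d - 1) • x)).card = m at h1 h2
  obtain ⟨e, rfl⟩ : ∃ e, d = e + 1 := ⟨d - 1, by omega⟩
  simp only [Nat.add_sub_cancel] at *
  generalize Nat.gcd e N = k at *
  constructor
  · nlinarith [Nat.mul_le_mul_left k h2]
  · nlinarith [Nat.mul_le_mul_left e h2, Nat.mul_le_mul_right m hkd]
end

section
/- Let N > 1 be an integer and let d be the smallest prime factor of N (i.e., d is prime, d divides N, and every prime p dividing N satisfies d ≤ p). If A is a subset of Z_N that is {x, 2x, …, (d−1)x}-free, then d·|A| ≤ (d−1)·N (i.e., |A| ≤ (d−1)N/d). -/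
theorem stmt_11 (N d : ℕ) (hN : 1 < N) (hd : d.Prime) (hdN : d ∣ N)
    (hmin : ∀ p : ℕ, p.Prime → p ∣ N → d ≤ p) (A : Finset (ZMod N))
    (hA : ¬ ∃ x : ZMod N, ∀ i : ℕ, 1 ≤ i → i ≤ d - 1 → i • x ∈ A) :
    d * A.card ≤ (d - 1) * N := by
  classical
  haveI : NeZero N := ⟨by omega⟩
  have hcop : ∀ i : ℕ, 1 ≤ i → i ≤ d - 1 → Nat.Coprime i N := by
    intro i h1 h2
    apply Nat.Coprime.symm
    apply Nat.coprime_of_dvd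
    intro p hp hpN hpi
    have := hmin p hp hpN
    have := Nat.le_of_dvd (by omega) hpi
    have := hd.two_le
    omega
  have hsub : (Finset.univ : Finset (ZMod N)) ⊆
      (Finset.Icc 1 (d - 1)).biUnion (fun i => Aᶜ.image (fun b => (i : ZMod N)⁻¹ * b)) := by
    intro x _
    by_contra hx
    apply hA
    refine ⟨x, fun i h1 h2 => ?_⟩
    by_contra hi
    apply hx
    simp only [Finset.mem_biUnion, Finset.mem_image, Finset.mem_Icc]
    refine ⟨i, ⟨h1, h2⟩, i • x, by simpa using hi, ?_⟩
    rw [nsmul_eq_mul, ← mul_assoc, mul_comm _ (i : ZMod N),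
      ZMod.coe_mul_inv_eq_one i (hcop i h1 h2), one_mul]
  have h1 := Finset.card_le_card hsub
  have h2 := Finset.card_biUnion_le_card_mul (Finset.Icc 1 (d - 1))
    (fun i : ℕ => Aᶜ.image (fun b => (i : ZMod N)⁻¹ * b)) Aᶜ.card
    (fun i _ => Finset.card_image_le)
  have h3 := A.card_add_card_compl
  rw [Finset.card_univ, ZMod.card] at h1
  rw [ZMod.card] at h3
  rw [Nat.card_Icc] at h2
  obtain ⟨k, rfl⟩ : ∃ k, d = k + 1 := ⟨d - 1, by have := hd.two_le; omega⟩
  simp only [Nat.add_sub_cancel] at *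
  nlinarith
end

section
/- Let p be a prime and let d ≥ 1 and l ≥ 1 be integers. If A is a subset of Z_{p^l} that is {x, 2x, …, (p^d − 1)x}-free, then (p^d − 1)·|A| ≤ (p^d − 2)·p^l, i.e., |A| ≤ (1 − 1/(p^d − 1))·p^l. -/
lemma aux_fiber_s12 (p d l : ℕ) (hp : p.Prime) (hdl : d ≤ l) (y : ℕ) (hy : ¬ p ^ d ∣ y) :
    ((Finset.range (p ^ l)).filter (fun x => Nat.Coprime (p ^ l) x ∧
      ∃ i : ℕ, i < p ^ d ∧ (i * x) % p ^ l = y)).card ≤ p ^ (d - 1) * (p - 1) := by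
  have hy0 : y ≠ 0 := by rintro rfl; simp at hy
  obtain ⟨a, y', hy', rfl⟩ := Nat.exists_eq_pow_mul_and_not_dvd hy0 p hp.ne_one
  have had : a < d := by
    by_contra h
    exact hy (Dvd.dvd.mul_right (pow_dvd_pow p (by omega)) _)
  have hl0 : l ≠ 0 := by omega
  have hpl : p ^ l = p ^ a * p ^ (l - a) := by rw [← pow_add]; congr 1; omega
  have hpd : p ^ d = p ^ a * p ^ (d - a) := by rw [← pow_add]; congr 1; omega
  have hpa : 0 < p ^ a := pow_pos hp.pos _
  have key : ∀ x, ∃ j : ℕ, x ∈ ((Finset.range (p ^ l)).filter (fun x => Nat.Coprime (p ^ l) x ∧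
      ∃ i : ℕ, i < p ^ d ∧ (i * x) % p ^ l = p ^ a * y')) →
      j < p ^ (d - a) ∧ Nat.Coprime (p ^ (d - a)) j ∧ (j * x) % p ^ (l - a) = y' := by
    intro x
    by_cases hx : x ∈ ((Finset.range (p ^ l)).filter (fun x => Nat.Coprime (p ^ l) x ∧
      ∃ i : ℕ, i < p ^ d ∧ (i * x) % p ^ l = p ^ a * y'))
    swap
    · exact ⟨0, fun h => absurd h hx⟩
    simp only [Finset.mem_filter, Finset.mem_range] at hx
    obtain ⟨hxl, hc, i, hi, hix⟩ := hx
    have hcx : Nat.Coprime (p ^ a) x := Nat.Coprime.coprime_dvd_left (pow_dvd_pow p (by omega)) hc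
    have hdv : p ^ a ∣ i * x := by
      rw [← Nat.dvd_mod_iff (pow_dvd_pow p (show a ≤ l by omega)), hix]
      exact Dvd.intro _ rfl
    obtain ⟨j, rfl⟩ := hcx.dvd_of_dvd_mul_right hdv
    rw [mul_assoc, hpl, Nat.mul_mod_mul_left] at hix
    have hjx := Nat.eq_of_mul_eq_mul_left hpa hix
    refine ⟨j, fun _ => ⟨?_, ?_, hjx⟩⟩
    · rw [hpd] at hi; exact Nat.lt_of_mul_lt_mul_left hi
    · apply Nat.Coprime.pow_left
      rw [hp.coprime_iff_not_dvd]
      intro h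
      apply hy'
      rw [← hjx, Nat.dvd_mod_iff (dvd_pow_self p (by omega))]
      exact h.mul_right _
  choose f hf using key
  have hcard : ((((Finset.range (p ^ (d - a))).filter (fun j => Nat.Coprime (p ^ (d - a)) j)) ×ˢ
      Finset.range (p ^ a))).card = p ^ (d - 1) * (p - 1) := by
    rw [Finset.card_product, Finset.card_range]
    have : ((Finset.range (p ^ (d - a))).filter (fun j => Nat.Coprime (p ^ (d - a)) j)).card
      = Nat.totient (p ^ (d - a)) := rfl
    rw [this, Nat.totient_prime_pow hp (by omega)]
    have : p ^ (d - 1) = p ^ (d - a - 1) * p ^ a := by rw [← pow_add]; congr 1; omega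
    rw [this]; ring
  rw [← hcard]
  apply Finset.card_le_card_of_injOn (fun x => (f x, x / p ^ (l - a)))
  · intro x hx
    obtain ⟨h1, h2, h3⟩ := hf x hx
    simp only [Finset.coe_filter, Finset.mem_range, Set.mem_setOf_eq] at hx
    simp only [Finset.coe_product, Set.mem_prod, Finset.coe_filter, Finset.mem_range,
      Set.mem_setOf_eq, Finset.coe_range, Set.mem_Iio]
    refine ⟨⟨h1, h2⟩, ?_⟩
    rw [Nat.div_lt_iff_lt_mul (pow_pos hp.pos _), ← hpl]
    exact hx.1
  · intro x hx z hz hxz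
    simp only [Prod.mk.injEq] at hxz
    obtain ⟨h1, h2, h3⟩ := hf x hx
    obtain ⟨g1, g2, g3⟩ := hf z hz
    rw [← hxz.1] at g3
    have hc : Nat.Coprime (p ^ (l - a)) (f x) := by
      apply Nat.Coprime.pow_left
      exact Nat.Coprime.coprime_dvd_left (dvd_pow_self p (by omega)) h2
    have hm : f x * x ≡ f x * z [MOD p ^ (l - a)] := h3.trans g3.symm
    have hm2 : x % p ^ (l - a) = z % p ^ (l - a) := Nat.ModEq.cancel_left_of_coprime hc hm
    rw [← Nat.div_add_mod x (p ^ (l - a)), ← Nat.div_add_mod z (p ^ (l - a)), hm2, hxz.2]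

lemma aux_top (p d l : ℕ) (hp : p.Prime) (hd : 1 ≤ d) (hdl : d ≤ l) (B : Finset ℕ)
    (h : ∀ x : ℕ, ∃ i : ℕ, 1 ≤ i ∧ i < p ^ d ∧ (i * x) % p ^ l ∈ B) :
    p ^ (l - d) ≤ (B.filter (fun y => ¬ p ^ d ∣ y)).card := by
  set T := B.filter (fun y => ¬ p ^ d ∣ y) with hT
  have hU : ((Finset.range (p ^ l)).filter (fun x => Nat.Coprime (p ^ l) x)).card
      = p ^ (l - 1) * (p - 1) := by
    rw [← Nat.totient_prime_pow hp (by omega)]; rfl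
  have hsub : (Finset.range (p ^ l)).filter (fun x => Nat.Coprime (p ^ l) x) ⊆
      T.biUnion (fun y => (Finset.range (p ^ l)).filter (fun x => Nat.Coprime (p ^ l) x ∧
      ∃ i : ℕ, i < p ^ d ∧ (i * x) % p ^ l = y)) := by
    intro x hx
    rw [Finset.mem_filter] at hx
    obtain ⟨i, hi1, hi2, hi3⟩ := h x
    rw [Finset.mem_biUnion]
    refine ⟨_, ?_, Finset.mem_filter.2 ⟨hx.1, hx.2, i, hi2, rfl⟩⟩
    rw [hT, Finset.mem_filter]
    refine ⟨hi3, fun hdv => ?_⟩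
    rw [Nat.dvd_mod_iff (pow_dvd_pow p hdl)] at hdv
    have hcx : Nat.Coprime (p ^ d) x := Nat.Coprime.coprime_dvd_left (pow_dvd_pow p hdl) hx.2
    have := Nat.le_of_dvd hi1 (hcx.dvd_of_dvd_mul_right hdv)
    omega
  have h1 := Finset.card_le_card hsub
  have h2 := h1.trans (Finset.card_biUnion_le_card_mul T _ (p ^ (d - 1) * (p - 1))
    (fun y hy => aux_fiber_s12 p d l hp hdl y (Finset.mem_filter.1 hy).2))
  rw [hU] at h2
  have e : p ^ (l - 1) = p ^ (l - d) * p ^ (d - 1) := by rw [← pow_add]; congr 1; omega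
  rw [e, mul_assoc] at h2
  refine Nat.le_of_mul_le_mul_right h2 (Nat.mul_pos (pow_pos hp.pos _) ?_)
  have := hp.two_le
  omega

lemma aux_main (p d : ℕ) (hp : p.Prime) (hd : 1 ≤ d) (l : ℕ) : ∀ (B : Finset ℕ)
    (_ : ∀ x : ℕ, ∃ i : ℕ, 1 ≤ i ∧ i < p ^ d ∧ (i * x) % p ^ l ∈ B),
    p ^ l ≤ (p ^ d - 1) * B.card := by
  induction l using Nat.strong_induction_on with
  | _ l ih =>
  intro B h
  rcases Nat.lt_or_ge l d with hld | hdl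
  · have h0 : 0 < B.card := by
      obtain ⟨i, _, _, hi⟩ := h 0
      exact Finset.card_pos.2 ⟨_, hi⟩
    have : p ^ l < p ^ d := Nat.pow_lt_pow_right hp.one_lt hld
    exact (show p ^ l ≤ p ^ d - 1 by omega).trans (Nat.le_mul_of_pos_right _ h0)
  · have htop := aux_top p d l hp hd hdl B h
    have hpl : p ^ l = p ^ d * p ^ (l - d) := by rw [← pow_add]; congr 1; omega
    have hpd : 0 < p ^ d := pow_pos hp.pos _
    have hih := ih (l - d) (by omega) ((B.filter (fun y => p ^ d ∣ y)).image (fun y => y / p ^ d))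
      (by
        intro x
        obtain ⟨i, h1, h2, h3⟩ := h (p ^ d * x)
        refine ⟨i, h1, h2, ?_⟩
        rw [mul_left_comm, hpl, Nat.mul_mod_mul_left] at h3
        rw [Finset.mem_image]
        exact ⟨_, Finset.mem_filter.2 ⟨h3, Dvd.intro _ rfl⟩, Nat.mul_div_cancel_left _ hpd⟩)
    have hci := Finset.card_image_le (s := B.filter (fun y => p ^ d ∣ y)) (f := fun y => y / p ^ d)
    have hsum := Finset.card_filter_add_card_filter_not (s := B) (fun y => p ^ d ∣ y)
    have h3 := hih.trans (Nat.mul_le_mul_left _ hci)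
    have h4 := Nat.mul_le_mul_left (p ^ d - 1) htop
    rw [← hsum, mul_add, hpl]
    have e : p ^ d * p ^ (l - d) = p ^ (l - d) + (p ^ d - 1) * p ^ (l - d) := by
      obtain ⟨k, hk⟩ := Nat.exists_eq_add_of_lt hpd
      rw [hk]; simp; ring
    rw [e]
    exact Nat.add_le_add h3 h4

theorem stmt_12 (p d l : ℕ) (hp : p.Prime) (hd : 1 ≤ d) (hl : 1 ≤ l)
    (A : Finset (ZMod (p ^ l)))
    (hA : ¬ ∃ x : ZMod (p ^ l), ∀ i : ℕ, 1 ≤ i → i ≤ p ^ d - 1 → i • x ∈ A) :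
    (p ^ d - 1) * A.card ≤ (p ^ d - 2) * p ^ l := by
  haveI : NeZero (p ^ l) := ⟨(pow_pos hp.pos _).ne'⟩
  have hpd : 2 ≤ p ^ d := hp.two_le.trans (Nat.le_self_pow (by omega) p)
  have hm := aux_main p d hp hd l (Aᶜ.image ZMod.val) (by
    intro x
    by_contra hcon
    apply hA
    refine ⟨(x : ZMod (p ^ l)), fun i h1 h2 => ?_⟩
    by_contra hn
    apply hcon
    refine ⟨i, h1, by omega, ?_⟩
    rw [Finset.mem_image]
    refine ⟨_, Finset.mem_compl.2 hn, ?_⟩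
    rw [nsmul_eq_mul, ← Nat.cast_mul, ZMod.val_natCast])
  have h1 := hm.trans (Nat.mul_le_mul_left _ Finset.card_image_le)
  have h2 := Finset.card_add_card_compl A
  rw [ZMod.card] at h2
  obtain ⟨k, hk⟩ := Nat.exists_eq_add_of_le hpd
  have e1 : p ^ d - 1 = k + 1 := by omega
  have e2 : p ^ d - 2 = k := by omega
  rw [e1] at h1 ⊢
  rw [e2]
  have h3 : (k + 1) * A.card + (k + 1) * Aᶜ.card = (k + 1) * p ^ l := by rw [← mul_add, h2]
  have h4 : (k + 1) * p ^ l = k * p ^ l + p ^ l := by ring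
  omega
end

section
/- Let N ≥ 1 be an integer and let A be a subset of Z_N such that A ∩ (2·A) = ∅, where 2·A = {2a : a ∈ A}. Then 3·|A| ≤ 2·N (i.e., |A| ≤ 2N/3). -/
theorem stmt_14 (N : ℕ) (hN : 1 ≤ N) (A : Finset (ZMod N))
    (h : A ∩ A.image (fun a => a + a) = ∅) :
    3 * A.card ≤ 2 * N := by
  have : NeZero N := ⟨by omega⟩
  have h1 : A.card ≤ 2 * (A.image (fun a => a + a)).card := by
    apply Finset.card_le_mul_card_image
    intro b _
    have : (Finset.univ : Finset Bool).card = 2 := rfl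
    rw [← this]
    apply Finset.card_le_card_of_injOn (fun x => decide (2 * x.val < N)) (fun _ _ => Finset.mem_coe.2 (Finset.mem_univ _))
    intro x hx y hy hxy
    simp only [Finset.coe_filter, Set.mem_ofPred_eq] at hx hy
    have e := congrArg ZMod.val (hx.2.trans hy.2.symm)
    rw [ZMod.val_add, ZMod.val_add] at e
    have hx' := ZMod.val_lt x
    have hy' := ZMod.val_lt y
    have hiff : 2 * x.val < N ↔ 2 * y.val < N := by simpa using hxy
    apply ZMod.val_injective N
    by_cases c : 2 * x.val < N
    · have c' := hiff.1 c
      rw [Nat.mod_eq_of_lt (by omega), Nat.mod_eq_of_lt (by omega)] at e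
      omega
    · have c' : ¬ 2 * y.val < N := fun t => c (hiff.2 t)
      rw [Nat.mod_eq_sub_mod (by omega), Nat.mod_eq_of_lt (by omega),
        Nat.mod_eq_sub_mod (by omega), Nat.mod_eq_of_lt (by omega)] at e
      omega
  have h2 := Finset.card_union_of_disjoint (Finset.disjoint_iff_inter_eq_empty.2 h)
  have h3 := Finset.card_le_univ (A ∪ A.image (fun a => a + a))
  rw [ZMod.card] at h3
  omega
end

section
/- Let p be a prime and let d ≥ 1, l ≥ 1, and a ≥ 1 be integers with a ≤ l − d + 1. For an integer i with 1 ≤ i ≤ l, define the layer L_i = {x ∈ Z_{p^l} : p^{i−1} divides x and p^i does not divide x} (where divisibility is tested on the representative of x in {0, 1, …, p^l − 1}), and write L_{[a, a+d−1]} = L_a ∪ L_{a+1} ∪ ⋯ ∪ L_{a+d−1}. If A is a subset of Z_{p^l} that is {x, 2x, …, (p^d − 1)x}-free, then (p^d − 1)·|A ∩ L_{[a, a+d−1]}| ≤ (p^d − 2)·|L_{[a, a+d−1]}|. -/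
/-- The layer `L_i ⊆ ZMod (p ^ l)`: elements whose representative in `{0, …, p^l - 1}`
is divisible by `p^(i-1)` but not by `p^i`. -/
def layer (p l i : ℕ) : Set (ZMod (p ^ l)) :=
  {x : ZMod (p ^ l) | p ^ (i - 1) ∣ x.val ∧ ¬ p ^ i ∣ x.val}

/-- The block of layers `L_{[a, a+d-1]} = L_a ∪ L_{a+1} ∪ ⋯ ∪ L_{a+d-1}`. -/
def layerBlock (p l a d : ℕ) : Set (ZMod (p ^ l)) :=
  ⋃ i ∈ Set.Icc a (a + d - 1), layer p l i

lemma natCast_mem_layer {p l i : ℕ} (hi : i ≤ l) (n : ℕ) :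
    ((n : ℕ) : ZMod (p ^ l)) ∈ layer p l i ↔ p ^ (i - 1) ∣ n ∧ ¬ p ^ i ∣ n := by
  unfold layer
  rw [Set.mem_setOf_eq, ZMod.val_natCast, Nat.dvd_mod_iff (pow_dvd_pow p (by omega)),
    Nat.dvd_mod_iff (pow_dvd_pow p hi)]

lemma mul_mem_layer {p l a j u : ℕ} (hp : p.Prime) (hu : ¬ p ∣ u) (ha : 1 ≤ a)
    (hal : a + j ≤ l) (x : ZMod (p ^ l)) :
    (p ^ j * u) • x ∈ layer p l (a + j) ↔ x ∈ layer p l a := by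
  haveI : NeZero (p ^ l) := ⟨(pow_pos hp.pos l).ne'⟩
  obtain ⟨n, rfl⟩ : ∃ n : ℕ, x = (n : ZMod (p ^ l)) := ⟨x.val, by simp⟩
  have h1 : (p ^ j * u) • (n : ZMod (p ^ l)) = ((p ^ j * (u * n) : ℕ) : ZMod (p ^ l)) := by
    rw [nsmul_eq_mul]; push_cast; ring
  have key : ∀ k, p ^ (k + j) ∣ p ^ j * (u * n) ↔ p ^ k ∣ n := by
    intro k
    rw [add_comm, pow_add, Nat.mul_dvd_mul_iff_left (pow_pos hp.pos j)]
    exact (Nat.Coprime.pow_left k ((Nat.Prime.coprime_iff_not_dvd hp).2 hu)).dvd_mul_left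
  rw [h1, natCast_mem_layer hal, natCast_mem_layer (by omega), key,
    show a + j - 1 = (a - 1) + j by omega, key]

lemma layer_unique {p l i k : ℕ} {x : ZMod (p ^ l)}
    (hi : x ∈ layer p l i) (hk : x ∈ layer p l k) : i = k := by
  rcases lt_trichotomy i k with h | h | h
  · exact absurd ((pow_dvd_pow p (by omega)).trans hk.1) hi.2
  · exact h
  · exact absurd ((pow_dvd_pow p (by omega)).trans hi.1) hk.2

lemma card_ker {N i : ℕ} [NeZero N] :
    (Finset.univ.filter fun z : ZMod N => i • z = 0).card = N.gcd i := by
  have h := IsAddCyclic.card_nsmulAddMonoidHom_ker (G := ZMod N) i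
  rw [Nat.card_zmod] at h
  rw [← h, ← Fintype.card_subtype, ← Nat.card_eq_fintype_card]
  rfl

lemma exists_sol {p l a j u : ℕ} (hp : p.Prime) (hu : ¬ p ∣ u) (ha : 1 ≤ a)
    (y : ZMod (p ^ l)) (hy : y ∈ layer p l (a + j)) :
    ∃ x : ZMod (p ^ l), (p ^ j * u) • x = y := by
  haveI : NeZero (p ^ l) := ⟨(pow_pos hp.pos l).ne'⟩
  obtain ⟨w, hw⟩ : p ^ j ∣ y.val := (pow_dvd_pow p (by omega)).trans hy.1
  have hc : Nat.Coprime u (p ^ l) :=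
    (Nat.Coprime.pow_left l ((Nat.Prime.coprime_iff_not_dvd hp).2 hu)).symm
  refine ⟨(w : ZMod (p ^ l)) * (u : ZMod (p ^ l))⁻¹, ?_⟩
  have h1 := ZMod.coe_mul_inv_eq_one u hc
  have h2 : y = ((p ^ j * w : ℕ) : ZMod (p ^ l)) := by rw [← hw]; simp
  rw [h2, nsmul_eq_mul]
  push_cast
  linear_combination (p : ZMod (p ^ l)) ^ j * w * h1

open Classical in
lemma fiber_card {p l a j u : ℕ} (hp : p.Prime) (hu : ¬ p ∣ u) (ha : 1 ≤ a)
    (hal : a + j ≤ l) [NeZero (p ^ l)] (y : ZMod (p ^ l)) (hy : y ∈ layer p l (a + j)) :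
    (Finset.univ.filter fun x : ZMod (p ^ l) => x ∈ layer p l a ∧ (p ^ j * u) • x = y).card
      = p ^ j := by
  obtain ⟨x0, hx0⟩ := exists_sol hp hu ha y hy
  have hg : (p ^ l).gcd (p ^ j * u) = p ^ j := by
    rw [Nat.Coprime.gcd_mul_right_cancel_right]
    · exact Nat.gcd_eq_right (pow_dvd_pow p (by omega))
    · exact (Nat.Coprime.pow_left l ((Nat.Prime.coprime_iff_not_dvd hp).2 hu)).symm
  have hk := card_ker (N := p ^ l) (i := p ^ j * u)
  rw [hg] at hk
  refine Eq.trans ?_ hk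
  refine Finset.card_bij' (fun x _ => x - x0) (fun z _ => z + x0) ?_ ?_ ?_ ?_
  · intro x hx
    simp only [Finset.mem_filter, Finset.mem_univ, true_and] at hx ⊢
    rw [nsmul_sub, hx.2, hx0, sub_self]
  · intro z hz
    simp only [Finset.mem_filter, Finset.mem_univ, true_and] at hz ⊢
    have : (p ^ j * u) • (z + x0) = y := by rw [nsmul_add, hz, hx0, zero_add]
    refine ⟨?_, this⟩
    rw [← mul_mem_layer hp hu ha hal, this]
    exact hy
  · intro x _; simp
  · intro x _; simp

lemma decomp {p d i : ℕ} (hp : p.Prime) (h1 : 1 ≤ i) (h2 : i < p ^ d) :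
    ∃ j u, j < d ∧ ¬ p ∣ u ∧ i = p ^ j * u ∧ (p ^ d).gcd i = p ^ j := by
  obtain ⟨j, u, hu, rfl⟩ := Nat.exists_eq_pow_mul_and_not_dvd (n := i) (by omega) p hp.ne_one
  have hu0 : 0 < u := Nat.pos_of_ne_zero (by rintro rfl; simp at hu)
  have hj : j < d := by
    by_contra h
    have := Nat.pow_le_pow_right hp.pos (not_lt.1 h)
    nlinarith [pow_pos hp.pos j]
  refine ⟨j, u, hj, hu, rfl, ?_⟩
  rw [Nat.Coprime.gcd_mul_right_cancel_right]
  · exact Nat.gcd_eq_right (pow_dvd_pow p (by omega))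
  · exact (Nat.Coprime.pow_left d ((Nat.Prime.coprime_iff_not_dvd hp).2 hu)).symm

lemma mem_block {p l a d : ℕ} (hd : 1 ≤ d) {y : ZMod (p ^ l)} :
    y ∈ layerBlock p l a d ↔ ∃ j, j < d ∧ y ∈ layer p l (a + j) := by
  simp only [layerBlock, Set.mem_iUnion, Set.mem_Icc, exists_prop]
  constructor
  · rintro ⟨i, hi, h⟩
    exact ⟨i - a, by omega, by rwa [show a + (i - a) = i by omega]⟩
  · rintro ⟨j, hj, h⟩
    exact ⟨a + j, by omega, h⟩

open Classical in
lemma count {p l a d : ℕ} (hp : p.Prime) (hd : 1 ≤ d) (ha : 1 ≤ a)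
    (hal : a + d ≤ l + 1) [NeZero (p ^ l)] (y : ZMod (p ^ l)) (hy : y ∈ layerBlock p l a d) :
    ∑ i ∈ Finset.Icc 1 (p ^ d - 1),
      (Finset.univ.filter fun x : ZMod (p ^ l) => x ∈ layer p l a ∧ i • x = y).card
      = p ^ (d - 1) * (p - 1) := by
  obtain ⟨j, hj, hyj⟩ := (mem_block hd).1 hy
  have hpd := pow_pos hp.pos d
  have h1 : ∀ i ∈ Finset.Icc 1 (p ^ d - 1),
      (Finset.univ.filter fun x : ZMod (p ^ l) => x ∈ layer p l a ∧ i • x = y).card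
      = if (p ^ d).gcd i = p ^ j then p ^ j else 0 := by
    intro i hi
    rw [Finset.mem_Icc] at hi
    obtain ⟨k, u, hk, hu, rfl, hg⟩ := decomp (d := d) hp hi.1 (by omega)
    rw [hg]
    split_ifs with h
    · obtain rfl := Nat.pow_right_injective hp.two_le h
      exact fiber_card hp hu ha (by omega) y hyj
    · rw [Finset.card_eq_zero, Finset.filter_eq_empty_iff]
      rintro x - ⟨hx, hxy⟩
      apply h
      have := (mul_mem_layer hp hu ha (j := k) (by omega) x).2 hx
      rw [hxy] at this
      have := layer_unique this hyj
      rw [show k = j by omega]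
  rw [Finset.sum_congr rfl h1, ← Finset.sum_filter, Finset.sum_const, smul_eq_mul]
  have h2 : (Finset.Icc 1 (p ^ d - 1)).filter (fun i => (p ^ d).gcd i = p ^ j)
      = (Finset.range (p ^ d)).filter (fun i => (p ^ d).gcd i = p ^ j) := by
    ext i
    simp only [Finset.mem_filter, Finset.mem_Icc, Finset.mem_range]
    constructor
    · rintro ⟨h, h'⟩; exact ⟨by omega, h'⟩
    · rintro ⟨h, h'⟩
      refine ⟨⟨?_, by omega⟩, h'⟩
      rcases Nat.eq_zero_or_pos i with rfl | h0
      · rw [Nat.gcd_zero_right] at h'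
        have := Nat.pow_right_injective hp.two_le h'
        omega
      · exact h0
  rw [h2, ← Nat.totient_div_of_dvd (pow_dvd_pow p hj.le), Nat.pow_div hj.le hp.pos,
    Nat.totient_prime_pow hp (by omega), mul_right_comm, ← pow_add]
  congr 2
  omega

open Classical in
lemma double_count {p l a d : ℕ} (hp : p.Prime) (hd : 1 ≤ d) (ha : 1 ≤ a)
    (hal : a + d ≤ l + 1) [NeZero (p ^ l)] (A : Set (ZMod (p ^ l))) :
    ∑ x ∈ Finset.univ.filter (fun x : ZMod (p ^ l) => x ∈ layer p l a),
      ((Finset.Icc 1 (p ^ d - 1)).filter fun i => i • x ∈ A).card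
      = (A ∩ layerBlock p l a d).ncard * (p ^ (d - 1) * (p - 1)) := by
  have hpd := pow_pos hp.pos d
  set S := Finset.univ.filter (fun y : ZMod (p ^ l) => y ∈ A ∩ layerBlock p l a d) with hS
  have hcard : (A ∩ layerBlock p l a d).ncard = S.card := by
    rw [← Set.ncard_coe_finset]; congr 1; ext; simp [hS]
  rw [hcard, ← smul_eq_mul, ← Finset.sum_const]
  have h3 : ∀ y ∈ S, p ^ (d - 1) * (p - 1) = ∑ i ∈ Finset.Icc 1 (p ^ d - 1),
      (Finset.univ.filter fun x : ZMod (p ^ l) => x ∈ layer p l a ∧ i • x = y).card := by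
    intro y hy
    rw [hS, Finset.mem_filter] at hy
    exact (count hp hd ha hal y hy.2.2).symm
  rw [Finset.sum_congr rfl h3]
  simp_rw [← Finset.filter_filter, Finset.card_filter _ (Finset.Icc _ _),
    Finset.card_filter _ (Finset.filter _ _)]
  rw [Finset.sum_comm, Finset.sum_comm (s := S)]
  refine Finset.sum_congr rfl fun i hi => ?_
  rw [Finset.sum_comm]
  refine Finset.sum_congr rfl fun x hx => ?_
  rw [Finset.sum_ite_eq]
  rw [Finset.mem_Icc] at hi
  rw [Finset.mem_filter] at hx
  obtain ⟨k, u, hk, hu, rfl, hg⟩ := decomp (d := d) hp hi.1 (by omega)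
  have hb : (p ^ k * u) • x ∈ layerBlock p l a d :=
    (mem_block hd).2 ⟨k, hk, (mul_mem_layer hp hu ha (by omega) x).2 hx.2⟩
  simp only [hS, Finset.mem_filter, Finset.mem_univ, true_and, Set.mem_inter_iff, hb, and_true]

theorem stmt_15 (p l d a : ℕ) (hp : p.Prime) (hl : 1 ≤ l) (hd : 1 ≤ d)
    (ha : 1 ≤ a) (hal : a + d ≤ l + 1)
    (A : Set (ZMod (p ^ l)))
    (hA : ¬ ∃ x : ZMod (p ^ l), ∀ i : ℕ, 1 ≤ i → i ≤ p ^ d - 1 → i • x ∈ A) :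
    (p ^ d - 1) * (A ∩ layerBlock p l a d).ncard
      ≤ (p ^ d - 2) * (layerBlock p l a d).ncard := by
  classical
  haveI : NeZero (p ^ l) := ⟨(pow_pos hp.pos l).ne'⟩
  have hpd : 2 ≤ p ^ d := hp.two_le.trans (Nat.le_self_pow (by omega) p)
  have hA1 := double_count hp hd ha hal A
  have hU := double_count hp hd ha hal (Set.univ : Set (ZMod (p ^ l)))
  simp only [Set.mem_univ, Finset.filter_true, Set.univ_inter, Nat.card_Icc, Finset.sum_const,
    smul_eq_mul, Nat.add_sub_cancel] at hU
  have hle : ∑ x ∈ Finset.univ.filter (fun x : ZMod (p ^ l) => x ∈ layer p l a),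
      ((Finset.Icc 1 (p ^ d - 1)).filter fun i => i • x ∈ A).card
      ≤ (Finset.univ.filter (fun x : ZMod (p ^ l) => x ∈ layer p l a)).card * (p ^ d - 2) := by
    rw [← smul_eq_mul]
    refine Finset.sum_le_card_nsmul _ _ _ fun x _ => ?_
    have : ((Finset.Icc 1 (p ^ d - 1)).filter fun i => i • x ∈ A).card
        < (Finset.Icc 1 (p ^ d - 1)).card := by
      refine Finset.card_lt_card (Finset.filter_ssubset.2 ?_)
      by_contra hcon
      push Not at hcon
      exact hA ⟨x, fun i h1 h2 => hcon i (Finset.mem_Icc.2 ⟨h1, h2⟩)⟩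
    rw [Nat.card_Icc] at this
    omega
  rw [hA1] at hle
  have hc : 0 < p ^ (d - 1) * (p - 1) :=
    Nat.mul_pos (pow_pos hp.pos _) (by have := hp.two_le; omega)
  refine Nat.le_of_mul_le_mul_right ?_ hc
  calc (p ^ d - 1) * (A ∩ layerBlock p l a d).ncard * (p ^ (d - 1) * (p - 1))
      = (p ^ d - 1) * ((A ∩ layerBlock p l a d).ncard * (p ^ (d - 1) * (p - 1))) := by ring
    _ ≤ (p ^ d - 1) * ((Finset.univ.filter
        (fun x : ZMod (p ^ l) => x ∈ layer p l a)).card * (p ^ d - 2)) :=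
        Nat.mul_le_mul_left _ hle
    _ = (p ^ d - 2) * ((Finset.univ.filter
        (fun x : ZMod (p ^ l) => x ∈ layer p l a)).card * (p ^ d - 1)) := by ring
    _ = _ := by
      rw [mul_assoc, ← hU]
end

section
/- Let p be a prime, l ≥ 1 and k ≥ 1 integers with k ≤ l, and set d = p^k and N = p^l (so d divides N). If A is a subset of Z_N that is {x, 2x, …, (d−1)x}-free, then d·|A| ≤ (d−1)·N (i.e., |A| ≤ (d−1)N/d); that is, the conjectured bound for {x, 2x, …, (d−1)x}-free sets holds when N is a prime power. -/
lemma aux_fiber_s16 (p l k : ℕ) (hp : p.Prime) [NeZero (p ^ l)] (i : ℕ)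
    (hi0 : 0 < i) (hik : i < p ^ k) (b : ZMod (p ^ l)) :
    (Finset.univ.filter (fun u : (ZMod (p ^ l))ˣ => i • (u : ZMod (p ^ l)) = b)).card
      ≤ Nat.gcd (p ^ k) i := by
  classical
  set g := Nat.gcd (p ^ k) i with hg
  have hgpos : 0 < g := Nat.gcd_pos_of_pos_right _ hi0
  rcases (Finset.univ.filter (fun u : (ZMod (p ^ l))ˣ => i • (u : ZMod (p ^ l)) = b)).eq_empty_or_nonempty with h | ⟨u0, hu0⟩
  · rw [h]; simp
  simp only [Finset.mem_filter, Finset.mem_univ, true_and] at hu0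
  obtain ⟨a, ha⟩ : g ∣ i := Nat.gcd_dvd_right _ _
  obtain ⟨w, hwk, hw⟩ := (Nat.dvd_prime_pow hp).1 (Nat.gcd_dvd_left (p ^ k) i)
  rw [← hg] at hw
  have hwk' : w < k := by
    rcases hwk.lt_or_eq with h | h
    · exact h
    · exfalso
      have : g ≤ i := Nat.le_of_dvd hi0 (Nat.gcd_dvd_right _ _)
      rw [hw, h] at this; omega
  have hpa : ¬ p ∣ a := by
    rintro ⟨c, rfl⟩
    have h1 : p ^ (w + 1) ∣ i := ⟨c, by rw [ha, hw]; ring⟩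
    have h2 : p ^ (w + 1) ∣ p ^ k := pow_dvd_pow _ hwk'
    have h3 := Nat.dvd_gcd h2 h1
    rw [← hg, hw] at h3
    have := (Nat.pow_dvd_pow_iff_le_right hp.one_lt).1 h3
    omega
  have hcop : Nat.Coprime a (p ^ l) :=
    (((Nat.Prime.coprime_iff_not_dvd hp).2 hpa).symm).pow_right l
  have haU : IsUnit (a : ZMod (p ^ l)) := (ZMod.isUnit_iff_coprime a _).2 hcop
  refine le_trans ?_ (IsAddCyclic.card_nsmul_eq_zero_le (α := ZMod (p ^ l)) hgpos)
  refine Finset.card_le_card_of_injOn (fun u => (u : ZMod (p ^ l)) - u0) ?_ ?_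
  · intro u hu
    simp only [Finset.coe_filter, Finset.mem_univ, true_and, Set.mem_setOf_eq] at hu ⊢
    have h : (a : ZMod (p ^ l)) * (g • ((u : ZMod (p ^ l)) - u0)) = 0 := by
      have h1 : i • ((u : ZMod (p ^ l)) - u0) = 0 := by rw [smul_sub, hu, hu0, sub_self]
      rw [ha] at h1
      simp only [nsmul_eq_mul, Nat.cast_mul] at h1 ⊢
      rw [← h1]; ring
    exact (haU.mul_right_eq_zero).1 h
  · intro u _ v _ h
    exact Units.ext (sub_left_injective h)

lemma aux_count_s16 (p l k : ℕ) (hp : p.Prime) (hkl : k ≤ l) [NeZero (p ^ l)]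
    (b : ZMod (p ^ l)) :
    ∑ i ∈ Finset.Ico 1 (p ^ k), (Finset.univ.filter
      (fun u : (ZMod (p ^ l))ˣ => i • (u : ZMod (p ^ l)) = b)).card
      ≤ Nat.totient (p ^ k) := by
  classical
  by_cases hex : ∃ i ∈ Finset.Ico 1 (p ^ k), ∃ u : (ZMod (p ^ l))ˣ, i • (u : ZMod (p ^ l)) = b
  swap
  · rw [Finset.sum_eq_zero]
    · exact Nat.zero_le _
    · intro i hi
      rw [Finset.card_eq_zero, Finset.filter_eq_empty_iff]
      intro u _ hu
      exact hex ⟨i, hi, u, hu⟩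
  obtain ⟨i0, hi0, u0, hu0⟩ := hex
  rw [Finset.mem_Ico] at hi0
  set g := Nat.gcd (p ^ k) i0 with hg
  have key : ∀ i, ∀ u : (ZMod (p ^ l))ˣ, i • (u : ZMod (p ^ l)) = b → Nat.gcd (p ^ k) i = g := by
    intro i u hu
    have h1 : ((i : ℕ) : ZMod (p ^ l)) = ((i0 * ((u0 * u⁻¹ : (ZMod (p ^ l))ˣ) : ZMod (p ^ l)).val : ℕ) : ZMod (p ^ l)) := by
      rw [Nat.cast_mul, ZMod.natCast_zmod_val, Units.val_mul, ← mul_assoc, ← nsmul_eq_mul, hu0, ← hu,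
        nsmul_eq_mul, mul_assoc, Units.mul_inv, mul_one]
    have h2 := (ZMod.natCast_eq_natCast_iff _ _ _).1 h1
    have h3 := (h2.of_dvd (pow_dvd_pow p hkl)).gcd_eq
    have h4 : Nat.Coprime ((u0 * u⁻¹ : (ZMod (p ^ l))ˣ) : ZMod (p ^ l)).val (p ^ k) :=
      (ZMod.val_coe_unit_coprime _).coprime_dvd_right (pow_dvd_pow p hkl)
    rw [Nat.gcd_comm, h3, Nat.Coprime.gcd_mul_right_cancel _ h4, Nat.gcd_comm]
  obtain ⟨w, hwk, hw⟩ := (Nat.dvd_prime_pow hp).1 (Nat.gcd_dvd_left (p ^ k) i0)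
  rw [← hg] at hw
  have hwk' : w < k := by
    rcases hwk.lt_or_eq with h | h
    · exact h
    · exfalso
      have : g ≤ i0 := Nat.le_of_dvd (by omega) (Nat.gcd_dvd_right _ _)
      rw [hw, h] at this; omega
  calc _ ≤ ∑ i ∈ Finset.Ico 1 (p ^ k), (if Nat.gcd (p ^ k) i = g then g else 0) := by
        refine Finset.sum_le_sum fun i hi => ?_
        rw [Finset.mem_Ico] at hi
        split_ifs with h
        · exact (aux_fiber_s16 p l k hp i (by omega) hi.2 b).trans h.le
        · rw [Nat.le_zero, Finset.card_eq_zero, Finset.filter_eq_empty_iff]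
          intro u _ hu
          exact h (key i u hu)
    _ ≤ ∑ i ∈ Finset.range (p ^ k), (if Nat.gcd (p ^ k) i = g then g else 0) := by
        refine Finset.sum_le_sum_of_subset ?_
        intro i hi
        rw [Finset.mem_Ico] at hi
        exact Finset.mem_range.2 hi.2
    _ = Nat.totient (p ^ k / g) * g := by
        rw [Nat.totient_div_of_dvd (Nat.gcd_dvd_left _ _), ← Finset.sum_filter, Finset.sum_const, smul_eq_mul]
    _ = Nat.totient (p ^ k) := by
        rw [hw, Nat.pow_div hwk hp.pos, Nat.totient_prime_pow hp (by omega),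
          Nat.totient_prime_pow hp (by omega)]
        have : k - 1 = (k - w - 1) + w := by omega
        rw [this, pow_add]; ring

theorem stmt_16 (p l k : ℕ) (hp : p.Prime) (hk : 1 ≤ k) (hkl : k ≤ l)
    (A : Finset (ZMod (p ^ l)))
    (hA : ¬ ∃ x : ZMod (p ^ l), ∀ i : ℕ, 1 ≤ i → i ≤ p ^ k - 1 → i • x ∈ A) :
    p ^ k * A.card ≤ (p ^ k - 1) * p ^ l := by
  classical
  haveI : NeZero (p ^ l) := ⟨(pow_pos hp.pos l).ne'⟩
  have hpk : 0 < p ^ k := pow_pos hp.pos k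
  have hcard : A.card + Aᶜ.card = p ^ l := by
    rw [Finset.card_add_card_compl, ZMod.card]
  have hmain : Nat.totient (p ^ l) ≤ Aᶜ.card * Nat.totient (p ^ k) := by
    calc Nat.totient (p ^ l) = ∑ u : (ZMod (p ^ l))ˣ, 1 := by
          rw [Finset.sum_const, Finset.card_univ, ZMod.card_units_eq_totient, smul_eq_mul, mul_one]
      _ ≤ ∑ u : (ZMod (p ^ l))ˣ, ∑ b ∈ Aᶜ, ∑ i ∈ Finset.Ico 1 (p ^ k),
            (if i • (u : ZMod (p ^ l)) = b then 1 else 0) := by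
          refine Finset.sum_le_sum fun u _ => ?_
          have := not_exists.1 hA (u : ZMod (p ^ l))
          push Not at this
          obtain ⟨i, hi1, hi2, hi⟩ := this
          have hb : i • (u : ZMod (p ^ l)) ∈ Aᶜ := Finset.mem_compl.2 hi
          refine le_trans ?_ (Finset.single_le_sum (fun _ _ => Nat.zero_le _) hb)
          have hi' : i ∈ Finset.Ico 1 (p ^ k) := Finset.mem_Ico.2 ⟨hi1, by omega⟩
          refine le_trans ?_ (Finset.single_le_sum (fun _ _ => Nat.zero_le _) hi')
          simp
      _ = ∑ b ∈ Aᶜ, ∑ i ∈ Finset.Ico 1 (p ^ k), (Finset.univ.filter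
            (fun u : (ZMod (p ^ l))ˣ => i • (u : ZMod (p ^ l)) = b)).card := by
          rw [Finset.sum_comm]
          refine Finset.sum_congr rfl fun b _ => ?_
          rw [Finset.sum_comm]
          refine Finset.sum_congr rfl fun i _ => ?_
          rw [Finset.card_filter]
      _ ≤ ∑ b ∈ Aᶜ, Nat.totient (p ^ k) :=
          Finset.sum_le_sum fun b _ => aux_count_s16 p l k hp hkl b
      _ = _ := by rw [Finset.sum_const, smul_eq_mul]
  have h2 : p ^ l ≤ Aᶜ.card * p ^ k := by
    rw [Nat.totient_prime_pow hp (by omega), Nat.totient_prime_pow hp (by omega), ← mul_assoc] at hmain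
    have h3 := Nat.le_of_mul_le_mul_right hmain (Nat.sub_pos_of_lt hp.one_lt)
    have h4 := Nat.mul_le_mul_right p h3
    rwa [mul_assoc, ← pow_succ, ← pow_succ, Nat.sub_add_cancel hk,
      Nat.sub_add_cancel (hk.trans hkl)] at h4
  rw [Nat.sub_mul, one_mul]
  have h5 : p ^ k * p ^ l = p ^ k * A.card + Aᶜ.card * p ^ k := by
    have h6 := congrArg (fun t => p ^ k * t) hcard
    simp only [mul_add] at h6
    rw [mul_comm Aᶜ.card]
    exact h6.symm
  omega
end
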